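/- Let N ∈ ℕ with N ≥ 2, a > 0, R > 0 and x₀ ∈ ℝᴺ. Let w be continuous and nonnegative on the closed ball of radius R around x₀, C² on the open ball B_R(x₀), and satisfy −Δw ≤ a·w pointwise on B_R(x₀). Then w(x₀) ≤ (1/|B_R(x₀)|) ∫_{B_R(x₀)} w(x) dx + ( a R² / (2(N+2)) ) · sup_{B_R(x₀)} w, where |B_R(x₀)| denotes the Lebesgue measure of the ball. -/

import Mathlib

open MeasureTheory Metric

/-- The Laplacian: sum of the pure second partial derivatives. -/
noncomputable def lap {N : ℕ} (f : EuclideanSpace ℝ (Fin N) → ℝ)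
    (x : EuclideanSpace ℝ (Fin N)) : ℝ :=
  ∑ i : Fin N, fderiv ℝ (fun y => fderiv ℝ f y (EuclideanSpace.single i 1)) x
    (EuclideanSpace.single i 1)

/-!
The unit ball average of `y ↦ w (x + t • y)` interpolates between `w x` at `t = 0` and the average
of `w` over the ball of radius `t`. Its derivative in `t` is the average of `D w (x + t • y) y`.
Since `-y` is the gradient of the weight `(1 - ‖y‖ ^ 2) / 2`, which vanishes on the unit sphere,
integration by parts turns this into `t` times the average of `(1 - ‖y‖ ^ 2) / 2 * Δ w (x + t • y)`.
The same integration by parts, applied to linear functions, shows that the weight has average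
`1 / (n + 2)`. So `Δ w ≥ -K` bounds the derivative below by `-K * t / (n + 2)`, which is integrated
from `0` to `R`; for the theorem, `K = a * sup w`.
-/

section MeanValue

open Filter Laplacian Module Set Topology
open scoped RealInnerProductSpace

variable {F : Type*} [NormedAddCommGroup F]

section MetricBall

variable {X : Type*} [MetricSpace X] [MeasurableSpace X] [OpensMeasurableSpace X] (μ : Measure X)

lemma integrableOn_ball_of_continuousOn_closedBall [ProperSpace X] [IsFiniteMeasureOnCompacts μ]
    {f : X → F} {x : X} {r : ℝ} (hf : ContinuousOn f (closedBall x r)) :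
    IntegrableOn f (ball x r) μ :=
  (hf.integrableOn_compact (isCompact_closedBall x r)).mono_set ball_subset_closedBall

variable [NormedSpace ℝ F]

lemma tendsto_integral_ball_nhdsLT {f : X → F} {x : X} {R : ℝ} (hf : IntegrableOn f (ball x R) μ) :
    Tendsto (fun r ↦ ∫ y in ball x r, f y ∂μ) (𝓝[<] R) (𝓝 (∫ y in ball x R, f y ∂μ)) := by
  have hcover : AECover (μ.restrict (ball x R)) (𝓝[<] R) (ball x) := by
    refine ⟨?_, fun _ ↦ measurableSet_ball⟩
    filter_upwards [ae_restrict_mem (measurableSet_ball (x := x) (ε := R))] with y hy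
    exact (eventually_gt_nhds hy).filter_mono nhdsWithin_le_nhds
  refine (hcover.integral_tendsto_of_countably_generated hf).congr' ?_
  filter_upwards [self_mem_nhdsWithin] with r hr
  rw [Measure.restrict_restrict_of_subset (ball_subset_ball (le_of_lt hr))]

lemma tendsto_average_ball_nhdsLT [ProperSpace X] [IsFiniteMeasureOnCompacts μ]
    [μ.IsOpenPosMeasure] {f : X → F} {x : X} {R : ℝ} (hR : 0 < R)
    (hf : IntegrableOn f (ball x R) μ) :
    Tendsto (fun r ↦ ⨍ y in ball x r, f y ∂μ) (𝓝[<] R) (𝓝 (⨍ y in ball x R, f y ∂μ)) := by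
  have hmeasure : Tendsto (fun r ↦ μ.real (ball x r)) (𝓝[<] R) (𝓝 (μ.real (ball x R))) := by
    simpa using tendsto_integral_ball_nhdsLT (F := ℝ) μ
      (integrableOn_const (measure_ball_lt_top (μ := μ) (x := x) (r := R)).ne (C := (1 : ℝ)))
  have hpos : 0 < μ.real (ball x R) :=
    ENNReal.toReal_pos (measure_ball_pos μ x hR).ne' measure_ball_lt_top.ne
  simp_rw [setAverage_eq]
  exact (hmeasure.inv₀ hpos.ne').smul (tendsto_integral_ball_nhdsLT μ hf)

end MetricBall

variable {E : Type*} [NormedAddCommGroup E] [NormedSpace ℝ F]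

section UnitBall

variable [NormedSpace ℝ E]

lemma add_smul_mem_closedBall {x y : E} {t s : ℝ} (ht : |t| ≤ s) (hy : y ∈ closedBall 0 1) :
    x + t • y ∈ closedBall x s := by
  rw [mem_closedBall_zero_iff] at hy
  rw [mem_closedBall, dist_self_add_left, norm_smul, Real.norm_eq_abs]
  exact (mul_le_of_le_one_right (abs_nonneg t) hy).trans ht

variable [MeasurableSpace E] [BorelSpace E] (μ : Measure E)

lemma average_ball_eq_average_unitBall [FiniteDimensional ℝ E] [μ.IsAddHaarMeasure]
    (f : E → F) (x : E) {r : ℝ} (hr : 0 < r) :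
    ⨍ y in ball x r, f y ∂μ = ⨍ y in ball 0 1, f (x + r • y) ∂μ := by
  have htranslate : ∫ y in ball 0 r, f (x + y) ∂μ = ∫ y in ball x r, f y ∂μ := by
    rw [← (measurePreserving_add_left μ x).setIntegral_preimage_emb
      (MeasurableEquiv.addLeft x).measurableEmbedding f (ball x r)]
    simp
  have hmeasure : μ.real (ball x r) = r ^ finrank ℝ E * μ.real (ball 0 1) := by
    rw [Measure.real, Measure.addHaar_ball_of_pos μ x hr, ENNReal.toReal_mul,
      ENNReal.toReal_ofReal (by positivity), Measure.real]
  rw [setAverage_eq, setAverage_eq,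
    Measure.setIntegral_comp_smul_of_pos μ (fun z ↦ f (x + z)) _ hr, smul_unitBall_of_pos hr,
    htranslate, smul_smul, hmeasure, mul_inv_rev]

lemma hasDerivAt_integral_unitBall_comp_add_smul [ProperSpace E]
    [IsFiniteMeasureOnCompacts μ] {w : E → F} {x : E} {R t : ℝ}
    (hw : ContDiffOn ℝ 1 w (ball x R)) (ht : |t| < R) :
    HasDerivAt (fun t ↦ ∫ y in ball 0 1, w (x + t • y) ∂μ)
      (∫ y in ball 0 1, fderiv ℝ w (x + t • y) y ∂μ) t := by
  obtain ⟨s, hts, hsR⟩ := exists_between ht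
  have hmem {τ : ℝ} (hτ : |τ| < s) : ∀ y ∈ closedBall 0 1, x + τ • y ∈ ball x R := fun y hy ↦
    closedBall_subset_ball hsR (add_smul_mem_closedBall hτ.le hy)
  have hfderiv : ContinuousOn (fderiv ℝ w) (ball x R) :=
    hw.continuousOn_fderiv_of_isOpen isOpen_ball le_rfl
  obtain ⟨C, hC⟩ := (isCompact_closedBall x s).exists_bound_of_continuousOn
    (hfderiv.mono (closedBall_subset_ball hsR))
  have hcont {τ : ℝ} (hτ : |τ| < s) : ContinuousOn (fun y ↦ w (x + τ • y)) (closedBall 0 1) :=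
    hw.continuousOn.comp (by fun_prop) (hmem hτ)
  have hnhds : {τ : ℝ | |τ| < s} ∈ 𝓝 t := continuous_abs.continuousAt.eventually_lt_const hts
  refine (hasDerivAt_integral_of_dominated_loc_of_deriv_le (bound := fun _ ↦ C)
    (F' := fun τ y ↦ fderiv ℝ w (x + τ • y) y) hnhds ?_ ?_ ?_ ?_ ?_ ?_).2
  · filter_upwards [hnhds] with τ hτ
    exact (integrableOn_ball_of_continuousOn_closedBall μ (hcont hτ)).aestronglyMeasurable
  · exact integrableOn_ball_of_continuousOn_closedBall μ (hcont hts)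
  · exact (integrableOn_ball_of_continuousOn_closedBall μ ((hfderiv.comp (by fun_prop)
      (hmem hts)).clm_apply continuousOn_id)).aestronglyMeasurable
  · filter_upwards [ae_restrict_mem measurableSet_ball] with y hy τ hτ
    have hy' := ball_subset_closedBall hy
    calc ‖fderiv ℝ w (x + τ • y) y‖
        ≤ ‖fderiv ℝ w (x + τ • y)‖ :=
          ContinuousLinearMap.unit_le_opNorm _ _ (mem_closedBall_zero_iff.1 hy')
      _ ≤ C := hC _ (add_smul_mem_closedBall (le_of_lt hτ) hy')
  · exact integrableOn_const measure_ball_lt_top.ne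
  · filter_upwards [ae_restrict_mem measurableSet_ball] with y hy τ hτ
    have hline : HasDerivAt (fun τ : ℝ ↦ x + τ • y) y τ := by
      simpa using ((hasDerivAt_id τ).smul_const y).const_add x
    have hdiff := (hw.differentiableOn one_ne_zero).differentiableAt
      (isOpen_ball.mem_nhds (hmem hτ y (ball_subset_closedBall hy)))
    exact hdiff.hasFDerivAt.comp_hasDerivAt τ hline

end UnitBall

section ParaboloidCap

/-- The paraboloid `(1 - ‖y‖ ^ 2) / 2` over the unit ball, extended by zero: a potential with
gradient `-y` in the ball. The truncation by `min` makes it Lipschitz on the whole space, so that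
it is a legitimate test function in the Lipschitz integration by parts formula. -/
noncomputable def paraboloidCap (y : E) : ℝ := (1 - min ‖y‖ 1 ^ 2) / 2

lemma paraboloidCap_of_norm_le_one {y : E} (hy : ‖y‖ ≤ 1) :
    paraboloidCap y = (1 - ‖y‖ ^ 2) / 2 := by
  rw [paraboloidCap, min_eq_left hy]

lemma paraboloidCap_of_one_le_norm {y : E} (hy : 1 ≤ ‖y‖) : paraboloidCap y = 0 := by
  simp [paraboloidCap, min_eq_right hy]

lemma lipschitzWith_one_paraboloidCap : LipschitzWith 1 (paraboloidCap : E → ℝ) := by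
  refine LipschitzWith.of_dist_le_mul fun x y ↦ ?_
  set p := min ‖x‖ 1
  set q := min ‖y‖ 1
  have hp : 0 ≤ p ∧ p ≤ 1 := ⟨le_min (norm_nonneg x) zero_le_one, min_le_right _ _⟩
  have hq : 0 ≤ q ∧ q ≤ 1 := ⟨le_min (norm_nonneg y) zero_le_one, min_le_right _ _⟩
  have hpq : |p - q| ≤ dist x y := by
    rw [dist_eq_norm]
    exact (abs_min_sub_min_le_max _ _ _ _).trans (by simpa using abs_norm_sub_norm_le x y)
  calc dist (paraboloidCap x) (paraboloidCap y)
      = |p - q| * |(p + q) / 2| := by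
        rw [Real.dist_eq, abs_sub_comm, ← abs_mul]
        congr 1
        simp only [paraboloidCap, p, q]
        ring
    _ ≤ |p - q| * 1 := by
        gcongr
        rw [abs_le]
        constructor <;> linarith
    _ ≤ (1 : NNReal) * dist x y := by simpa using hpq

lemma hasCompactSupport_paraboloidCap [ProperSpace E] :
    HasCompactSupport (paraboloidCap : E → ℝ) :=
  .intro (isCompact_closedBall 0 1) fun y hy ↦
    paraboloidCap_of_one_le_norm (by simpa using (show 1 < ‖y‖ by simpa using hy).le)

end ParaboloidCap

variable [InnerProductSpace ℝ E]

section LaplacianFormulas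

variable [FiniteDimensional ℝ E]

lemma laplacian_eq_sum_fderiv_fderiv {ι : Type*} [Fintype ι] (b : OrthonormalBasis ι ℝ E)
    {f : E → F} {x : E} (hf : ContDiffAt ℝ 2 f x) :
    Δ f x = ∑ i, fderiv ℝ (fun y ↦ fderiv ℝ f y (b i)) x (b i) := by
  have hdiff : DifferentiableAt ℝ (fderiv ℝ f) x :=
    (hf.fderiv_right (m := 1) (by norm_num)).differentiableAt one_ne_zero
  rw [InnerProductSpace.laplacian_eq_iteratedFDeriv_orthonormalBasis f b]
  simp [iteratedFDeriv_two_apply, fderiv_clm_apply hdiff (differentiableAt_const _)]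

lemma laplacian_comp_add_smul (f : E → F) (x : E) (t : ℝ) (y : E) :
    Δ (fun z ↦ f (x + t • z)) y = t ^ 2 • Δ f (x + t • y) := by
  have hfderiv : fderiv ℝ (fun z ↦ f (x + t • z)) = t • fun z ↦ fderiv ℝ f (x + t • z) := by
    ext1 z
    rw [fderiv_comp_smul (f := fun z ↦ f (x + z)) t, fderiv_comp_add_left, Pi.smul_apply]
  have hfderiv₂ : fderiv ℝ (fderiv ℝ fun z ↦ f (x + t • z)) y
      = t • t • fderiv ℝ (fderiv ℝ f) (x + t • y) := by
    rw [hfderiv, fderiv_const_smul_field (f := fun z ↦ fderiv ℝ f (x + t • z)) t, Pi.smul_apply,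
      fderiv_comp_smul (f := fun z ↦ fderiv ℝ f (x + z)) t, fderiv_comp_add_left]
  simp [InnerProductSpace.laplacian_eq_iteratedFDeriv_stdOrthonormalBasis,
    iteratedFDeriv_two_apply, hfderiv₂, Finset.smul_sum, sq, mul_smul]

lemma continuousAt_laplacian {f : E → F} {x : E} (hf : ContDiffAt ℝ 2 f x) :
    ContinuousAt (Δ f) x := by
  have hcont : ContinuousAt (iteratedFDeriv ℝ 2 f) x :=
    (hf.iteratedFDeriv_right (m := 0) (by norm_num)).continuousAt
  rw [InnerProductSpace.laplacian_eq_iteratedFDeriv_stdOrthonormalBasis]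
  exact tendsto_finsetSum _ fun i _ ↦ ContinuousAt.eval_const hcont _

lemma lap_eq_laplacian {N : ℕ} {f : EuclideanSpace ℝ (Fin N) → ℝ} {x : EuclideanSpace ℝ (Fin N)}
    (hf : ContDiffAt ℝ 2 f x) : lap f x = Δ f x := by
  simp [lap, laplacian_eq_sum_fderiv_fderiv (EuclideanSpace.basisFun (Fin N) ℝ) hf]

end LaplacianFormulas

lemma lineDeriv_paraboloidCap_of_norm_lt_one {y : E} (hy : ‖y‖ < 1) (v : E) :
    lineDeriv ℝ paraboloidCap y v = -⟪y, v⟫ := by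
  have hcap : paraboloidCap =ᶠ[𝓝 y] fun z ↦ (2 : ℝ)⁻¹ • (1 - ‖z‖ ^ 2) := by
    filter_upwards [continuous_norm.continuousAt.eventually_lt_const hy] with z hz
    rw [paraboloidCap_of_norm_le_one hz.le, smul_eq_mul, div_eq_inv_mul]
  have hderiv := ((hasStrictFDerivAt_norm_sq y).hasFDerivAt.const_sub 1).const_smul (2 : ℝ)⁻¹
  rw [((hderiv.congr_of_eventuallyEq hcap).hasLineDerivAt v).lineDeriv]
  simp

lemma lineDeriv_paraboloidCap_of_one_lt_norm {y : E} (hy : 1 < ‖y‖) (v : E) :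
    lineDeriv ℝ paraboloidCap y v = 0 := by
  have hcap : paraboloidCap =ᶠ[𝓝 y] fun _ ↦ (0 : ℝ) := by
    filter_upwards [continuous_norm.continuousAt.eventually_const_lt hy] with z hz
    exact paraboloidCap_of_one_le_norm hz.le
  rw [hcap.lineDeriv_eq]
  simp [lineDeriv]

variable [FiniteDimensional ℝ E] [MeasurableSpace E] [BorelSpace E]
  (μ : Measure E) [μ.IsAddHaarMeasure]

lemma lineDeriv_paraboloidCap_ae_eq (v : E) :
    (fun y ↦ lineDeriv ℝ paraboloidCap y v) =ᵐ[μ] (ball 0 1).indicator fun y ↦ -⟪y, v⟫ := by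
  have hsphere : μ (sphere 0 1) = 0 := Measure.addHaar_sphere_of_ne_zero μ 0 one_ne_zero
  filter_upwards [measure_eq_zero_iff_ae_notMem.1 hsphere] with y hy
  rcases lt_or_gt_of_ne (mt mem_sphere_zero_iff_norm.2 hy) with hlt | hgt
  · rw [lineDeriv_paraboloidCap_of_norm_lt_one hlt, indicator_of_mem (by simpa using hlt)]
  · rw [lineDeriv_paraboloidCap_of_one_lt_norm hgt, indicator_of_notMem (by simpa using hgt.le)]

lemma integral_unitBall_inner_mul_of_lipschitzWith {C : NNReal} {g : E → ℝ}
    (hg : LipschitzWith C g) (v : E) :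
    ∫ y in ball 0 1, ⟪y, v⟫ * g y ∂μ
      = ∫ y in ball 0 1, (1 - ‖y‖ ^ 2) / 2 * lineDeriv ℝ g y v ∂μ := by
  have hcap : ∀ y : E, lineDeriv ℝ g y v * paraboloidCap y
      = (ball 0 1).indicator (fun y ↦ (1 - ‖y‖ ^ 2) / 2 * lineDeriv ℝ g y v) y := by
    intro y
    rcases lt_or_ge ‖y‖ 1 with hy | hy
    · rw [paraboloidCap_of_norm_le_one hy.le, indicator_of_mem (by simpa using hy), mul_comm]
    · rw [paraboloidCap_of_one_le_norm hy, indicator_of_notMem (by simpa using hy), mul_zero]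
  have hderiv : (fun y ↦ lineDeriv ℝ paraboloidCap y (-v) * g y)
      =ᵐ[μ] (ball 0 1).indicator fun y ↦ ⟪y, v⟫ * g y := by
    filter_upwards [lineDeriv_paraboloidCap_ae_eq μ (-v)] with y hy
    simp [hy, indicator_mul_left]
  rw [← integral_indicator measurableSet_ball, ← integral_indicator measurableSet_ball,
    ← integral_congr_ae hderiv, ← hg.integral_lineDeriv_mul_eq lipschitzWith_one_paraboloidCap
      hasCompactSupport_paraboloidCap v]
  exact integral_congr_ae (.of_forall hcap)

lemma integral_unitBall_inner_mul {g : E → ℝ} (hg : ∀ y ∈ closedBall 0 1, ContDiffAt ℝ 1 g y)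
    (v : E) :
    ∫ y in ball 0 1, ⟪y, v⟫ * g y ∂μ
      = ∫ y in ball 0 1, (1 - ‖y‖ ^ 2) / 2 * fderiv ℝ g y v ∂μ := by
  have hgOn : ContDiffOn ℝ 1 g (closedBall 0 1) := fun y hy ↦ (hg y hy).contDiffWithinAt
  obtain ⟨C, hC⟩ := (hgOn.locallyLipschitzOn
    (convex_closedBall 0 1)).exists_lipschitzOnWith_of_compact (isCompact_closedBall 0 1)
  obtain ⟨h, hLip, hgh⟩ := hC.extend_real
  have hlineDeriv : ∀ y ∈ ball (0 : E) 1, lineDeriv ℝ h y v = fderiv ℝ g y v := by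
    intro y hy
    have hnhds : h =ᶠ[𝓝 y] g := by
      filter_upwards [isOpen_ball.mem_nhds hy] with z hz
      exact (hgh (ball_subset_closedBall hz)).symm
    rw [hnhds.lineDeriv_eq]
    exact ((hg y (ball_subset_closedBall hy)).differentiableAt one_ne_zero).lineDeriv_eq_fderiv
  calc ∫ y in ball 0 1, ⟪y, v⟫ * g y ∂μ
      = ∫ y in ball 0 1, ⟪y, v⟫ * h y ∂μ :=
        setIntegral_congr_fun measurableSet_ball fun y hy ↦ by
          simp only [hgh (ball_subset_closedBall hy)]
    _ = ∫ y in ball 0 1, (1 - ‖y‖ ^ 2) / 2 * lineDeriv ℝ h y v ∂μ :=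
        integral_unitBall_inner_mul_of_lipschitzWith μ hLip v
    _ = ∫ y in ball 0 1, (1 - ‖y‖ ^ 2) / 2 * fderiv ℝ g y v ∂μ :=
        setIntegral_congr_fun measurableSet_ball fun y hy ↦ by simp only [hlineDeriv y hy]

lemma integral_unitBall_norm_sq :
    ∫ y in ball 0 1, ‖y‖ ^ 2 ∂μ = finrank ℝ E * ∫ y in ball 0 1, (1 - ‖y‖ ^ 2) / 2 ∂μ := by
  let b := stdOrthonormalBasis ℝ E
  have hcoord (v : E) (hv : ‖v‖ = 1) :
      ∫ y in ball 0 1, ⟪y, v⟫ ^ 2 ∂μ = ∫ y in ball 0 1, (1 - ‖y‖ ^ 2) / 2 ∂μ := by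
    have hparts := integral_unitBall_inner_mul μ (g := innerSL ℝ v)
      (fun y _ ↦ (innerSL ℝ v).contDiff.contDiffAt) v
    simp only [ContinuousLinearMap.fderiv] at hparts
    simpa [sq, real_inner_comm, hv] using hparts
  calc ∫ y in ball 0 1, ‖y‖ ^ 2 ∂μ
      = ∑ i, ∫ y in ball 0 1, ⟪y, b i⟫ ^ 2 ∂μ := by
        simp_rw [← b.sum_sq_inner_left]
        exact integral_finsetSum _ fun i _ ↦
          integrableOn_ball_of_continuousOn_closedBall μ (by fun_prop)
    _ = finrank ℝ E * ∫ y in ball 0 1, (1 - ‖y‖ ^ 2) / 2 ∂μ := by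
        simp [hcoord _ (b.norm_eq_one _)]

lemma integral_unitBall_one_sub_norm_sq_div_two :
    ∫ y in ball 0 1, (1 - ‖y‖ ^ 2) / 2 ∂μ = μ.real (ball 0 1) / (finrank ℝ E + 2) := by
  have hsplit : 2 * ∫ y in ball 0 1, (1 - ‖y‖ ^ 2) / 2 ∂μ
      = μ.real (ball 0 1) - ∫ y in ball 0 1, ‖y‖ ^ 2 ∂μ := by
    rw [integral_div, integral_sub
      (integrableOn_ball_of_continuousOn_closedBall μ continuousOn_const)
      (integrableOn_ball_of_continuousOn_closedBall μ (by fun_prop))]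
    simp only [integral_const, measureReal_restrict_apply_univ, smul_eq_mul, mul_one]
    ring
  rw [eq_div_iff (by positivity)]
  linarith [integral_unitBall_norm_sq μ]

lemma integral_unitBall_fderiv_self {u : E → ℝ} (hu : ∀ y ∈ closedBall 0 1, ContDiffAt ℝ 2 u y) :
    ∫ y in ball 0 1, fderiv ℝ u y y ∂μ = ∫ y in ball 0 1, (1 - ‖y‖ ^ 2) / 2 * Δ u y ∂μ := by
  let b := stdOrthonormalBasis ℝ E
  have hpartial (i) : ∀ y ∈ closedBall 0 1, ContDiffAt ℝ 1 (fun z ↦ fderiv ℝ u z (b i)) y :=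
    fun y hy ↦ ((hu y hy).fderiv_right (by norm_num)).clm_apply contDiffAt_const
  have hexpand (y : E) : fderiv ℝ u y y = ∑ i, ⟪y, b i⟫ * fderiv ℝ u y (b i) := by
    conv_lhs => enter [2]; rw [← b.sum_repr' y]
    simp [real_inner_comm]
  calc ∫ y in ball 0 1, fderiv ℝ u y y ∂μ
      = ∑ i, ∫ y in ball 0 1, ⟪y, b i⟫ * fderiv ℝ u y (b i) ∂μ := by
        simp_rw [hexpand]
        exact integral_finsetSum _ fun i _ ↦ integrableOn_ball_of_continuousOn_closedBall μ
          fun y hy ↦ ContinuousAt.continuousWithinAt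
            (.mul (by fun_prop) (hpartial i y hy).continuousAt)
    _ = ∑ i, ∫ y in ball 0 1,
          (1 - ‖y‖ ^ 2) / 2 * fderiv ℝ (fun z ↦ fderiv ℝ u z (b i)) y (b i) ∂μ := by
        simp_rw [integral_unitBall_inner_mul μ (hpartial _)]
    _ = ∫ y in ball 0 1, ∑ i,
          (1 - ‖y‖ ^ 2) / 2 * fderiv ℝ (fun z ↦ fderiv ℝ u z (b i)) y (b i) ∂μ :=
        (integral_finsetSum _ fun i _ ↦ integrableOn_ball_of_continuousOn_closedBall μ
          fun y hy ↦ ContinuousAt.continuousWithinAt (.mul (by fun_prop)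
            (((hpartial i y hy).continuousAt_fderiv one_ne_zero).clm_apply
              continuousAt_const))).symm
    _ = ∫ y in ball 0 1, (1 - ‖y‖ ^ 2) / 2 * Δ u y ∂μ :=
        setIntegral_congr_fun measurableSet_ball fun y hy ↦ by
          simp only [laplacian_eq_sum_fderiv_fderiv b (hu y (ball_subset_closedBall hy)),
            Finset.mul_sum]

lemma integral_unitBall_fderiv_comp_add_smul {w : E → ℝ} {x : E} {t : ℝ} (ht : 0 < t)
    (hw : ∀ y ∈ closedBall x t, ContDiffAt ℝ 2 w y) :
    ∫ y in ball 0 1, fderiv ℝ w (x + t • y) y ∂μ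
      = t * ∫ y in ball 0 1, (1 - ‖y‖ ^ 2) / 2 * Δ w (x + t • y) ∂μ := by
  have hcomp : ∀ y ∈ closedBall 0 1, ContDiffAt ℝ 2 (fun z ↦ w (x + t • z)) y := fun y hy ↦
    (hw _ (add_smul_mem_closedBall (abs_of_pos ht).le hy)).comp y (by fun_prop)
  have hfderiv (y : E) :
      fderiv ℝ (fun z ↦ w (x + t • z)) y y = t * fderiv ℝ w (x + t • y) y := by
    rw [fderiv_comp_smul (f := fun z ↦ w (x + z)) t, fderiv_comp_add_left]
    simp
  refine mul_left_cancel₀ ht.ne' ?_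
  calc t * ∫ y in ball 0 1, fderiv ℝ w (x + t • y) y ∂μ
      = ∫ y in ball 0 1, fderiv ℝ (fun z ↦ w (x + t • z)) y y ∂μ := by
        simp_rw [hfderiv, integral_const_mul]
    _ = ∫ y in ball 0 1, (1 - ‖y‖ ^ 2) / 2 * Δ (fun z ↦ w (x + t • z)) y ∂μ :=
        integral_unitBall_fderiv_self μ hcomp
    _ = t * (t * ∫ y in ball 0 1, (1 - ‖y‖ ^ 2) / 2 * Δ w (x + t • y) ∂μ) := by
        simp_rw [laplacian_comp_add_smul, smul_eq_mul, mul_left_comm _ (t ^ 2), integral_const_mul]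
        ring

lemma neg_mul_le_integral_unitBall_fderiv {w : E → ℝ} {x : E} {K t : ℝ} (ht : 0 < t)
    (hw : ∀ y ∈ closedBall x t, ContDiffAt ℝ 2 w y) (hK : ∀ y ∈ closedBall x t, -K ≤ Δ w y) :
    -K * t * (μ.real (ball 0 1) / (finrank ℝ E + 2))
      ≤ ∫ y in ball 0 1, fderiv ℝ w (x + t • y) y ∂μ := by
  have hmem : ∀ y ∈ closedBall 0 1, x + t • y ∈ closedBall x t := fun y hy ↦
    add_smul_mem_closedBall (abs_of_pos ht).le hy
  have hΔ : ContinuousOn (fun y ↦ Δ w (x + t • y)) (closedBall 0 1) :=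
    ContinuousOn.comp (fun y hy ↦ (continuousAt_laplacian (hw y hy)).continuousWithinAt)
      (by fun_prop) hmem
  calc -K * t * (μ.real (ball 0 1) / (finrank ℝ E + 2))
      = t * ∫ y in ball 0 1, (1 - ‖y‖ ^ 2) / 2 * (-K) ∂μ := by
        rw [integral_mul_const, integral_unitBall_one_sub_norm_sq_div_two]
        ring
    _ ≤ t * ∫ y in ball 0 1, (1 - ‖y‖ ^ 2) / 2 * Δ w (x + t • y) ∂μ := by
        gcongr t * ?_
        refine setIntegral_mono_on
          (integrableOn_ball_of_continuousOn_closedBall μ (by fun_prop))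
          (integrableOn_ball_of_continuousOn_closedBall μ (by fun_prop))
          measurableSet_ball fun y hy ↦ ?_
        have hnorm : ‖y‖ ^ 2 ≤ 1 := pow_le_one₀ (norm_nonneg y) (mem_ball_zero_iff.1 hy).le
        exact mul_le_mul_of_nonneg_left (hK _ (hmem y (ball_subset_closedBall hy))) (by linarith)
    _ = ∫ y in ball 0 1, fderiv ℝ w (x + t • y) y ∂μ :=
        (integral_unitBall_fderiv_comp_add_smul μ ht hw).symm

lemma mul_measureReal_unitBall_le_integral_add {w : E → ℝ} {x : E} {K r R : ℝ} (hr : 0 < r)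
    (hrR : r < R) (hw : ContDiffOn ℝ 2 w (ball x R)) (hK : ∀ y ∈ ball x R, -K ≤ Δ w y) :
    w x * μ.real (ball 0 1) ≤ ∫ y in ball 0 1, w (x + r • y) ∂μ
      + K * r ^ 2 / 2 * (μ.real (ball 0 1) / (finrank ℝ E + 2)) := by
  set A := μ.real (ball 0 1) / (finrank ℝ E + 2)
  have hderiv : ∀ t ∈ Icc 0 r, HasDerivAt
      (fun t ↦ ∫ y in ball 0 1, w (x + t • y) ∂μ + K * t ^ 2 / 2 * A)
      (∫ y in ball 0 1, fderiv ℝ w (x + t • y) y ∂μ + K * t * A) t := by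
    intro t ht
    have hquad : HasDerivAt (fun t ↦ K * t ^ 2 / 2 * A) (K * t * A) t := by
      refine ((((hasDerivAt_pow 2 t).const_mul K).div_const 2).mul_const A).congr_deriv ?_
      simp only [Nat.cast_ofNat, Nat.add_one_sub_one, pow_one]
      ring
    exact (hasDerivAt_integral_unitBall_comp_add_smul μ (hw.of_le one_le_two)
      (abs_lt.2 ⟨by linarith [ht.1], ht.2.trans_lt hrR⟩)).add hquad
  have hmono : MonotoneOn
      (fun t ↦ ∫ y in ball 0 1, w (x + t • y) ∂μ + K * t ^ 2 / 2 * A) (Icc 0 r) := by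
    refine monotoneOn_of_deriv_nonneg (convex_Icc 0 r) (HasDerivAt.continuousOn hderiv)
      (fun t ht ↦ (hderiv t (interior_subset ht)).differentiableAt.differentiableWithinAt)
      fun t ht ↦ ?_
    rw [(hderiv t (interior_subset ht)).deriv]
    rw [interior_Icc] at ht
    have hsub : closedBall x t ⊆ ball x R := closedBall_subset_ball (ht.2.trans hrR)
    linarith [neg_mul_le_integral_unitBall_fderiv μ ht.1
      (fun y hy ↦ hw.contDiffAt (isOpen_ball.mem_nhds (hsub hy))) fun y hy ↦ hK y (hsub hy)]
  simpa [mul_comm] using hmono (left_mem_Icc.2 hr.le) (right_mem_Icc.2 hr.le) hr.le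

lemma le_average_ball_add_of_neg_le_laplacian_of_lt {w : E → ℝ} {x : E} {K r R : ℝ} (hr : 0 < r)
    (hrR : r < R) (hw : ContDiffOn ℝ 2 w (ball x R)) (hK : ∀ y ∈ ball x R, -K ≤ Δ w y) :
    w x ≤ ⨍ y in ball x r, w y ∂μ + K * r ^ 2 / (2 * (finrank ℝ E + 2)) := by
  have hV : 0 < μ.real (ball (0 : E) 1) :=
    ENNReal.toReal_pos (measure_ball_pos μ 0 one_pos).ne' measure_ball_lt_top.ne
  rw [average_ball_eq_average_unitBall μ w x hr, setAverage_eq, smul_eq_mul,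
    ← mul_le_mul_iff_left₀ hV]
  refine (mul_measureReal_unitBall_le_integral_add μ hr hrR hw hK).trans_eq ?_
  field_simp

theorem le_average_ball_add_of_neg_le_laplacian {w : E → ℝ} {x : E} {K R : ℝ} (hR : 0 < R)
    (hw : ContDiffOn ℝ 2 w (ball x R)) (hint : IntegrableOn w (ball x R) μ)
    (hK : ∀ y ∈ ball x R, -K ≤ Δ w y) :
    w x ≤ ⨍ y in ball x R, w y ∂μ + K * R ^ 2 / (2 * (finrank ℝ E + 2)) := by
  have hlim : Tendsto (fun r ↦ ⨍ y in ball x r, w y ∂μ + K * r ^ 2 / (2 * (finrank ℝ E + 2)))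
      (𝓝[<] R) (𝓝 (⨍ y in ball x R, w y ∂μ + K * R ^ 2 / (2 * (finrank ℝ E + 2)))) :=
    (tendsto_average_ball_nhdsLT μ hR hint).add
      (ContinuousAt.tendsto (by fun_prop) |>.mono_left nhdsWithin_le_nhds)
  refine ge_of_tendsto hlim ?_
  filter_upwards [Ioo_mem_nhdsLT hR] with r hr
  exact le_average_ball_add_of_neg_le_laplacian_of_lt μ hr.1 hr.2 hw hK

theorem stmt8_general {w : E → ℝ} {x₀ : E} {a R : ℝ} (ha : 0 ≤ a) (hR : 0 < R)
    (hbdd : BddAbove (w '' ball x₀ R)) (hint : IntegrableOn w (ball x₀ R) μ)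
    (hw : ContDiffOn ℝ 2 w (ball x₀ R)) (hsub : ∀ x ∈ ball x₀ R, -Δ w x ≤ a * w x) :
    w x₀ ≤ ⨍ x in ball x₀ R, w x ∂μ
      + a * R ^ 2 / (2 * (finrank ℝ E + 2)) * sSup (w '' ball x₀ R) := by
  have hK : ∀ x ∈ ball x₀ R, -(a * sSup (w '' ball x₀ R)) ≤ Δ w x := fun x hx ↦
    neg_le.1 ((hsub x hx).trans
      (mul_le_mul_of_nonneg_left (le_csSup hbdd (mem_image_of_mem w hx)) ha))
  refine (le_average_ball_add_of_neg_le_laplacian μ hR hw hint hK).trans_eq ?_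
  ring

end MeanValue

/-- mean value inequality for nonnegative subsolutions of `−Δw ≤ a w`:
`w(x₀) ≤ (1/|B_R(x₀)|) ∫_{B_R(x₀)} w + (aR²/(2(N+2))) sup_{B_R(x₀)} w`. -/
theorem stmt8 (N : ℕ) (hN : 2 ≤ N) (a R : ℝ) (ha : 0 < a) (hR : 0 < R)
    (x₀ : EuclideanSpace ℝ (Fin N)) (w : EuclideanSpace ℝ (Fin N) → ℝ)
    (hwc : ContinuousOn w (Metric.closedBall x₀ R))
    (hw0 : ∀ x ∈ Metric.closedBall x₀ R, 0 ≤ w x)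
    (hw2 : ContDiffOn ℝ 2 w (Metric.ball x₀ R))
    (hsub : ∀ x ∈ Metric.ball x₀ R, -lap w x ≤ a * w x) :
    w x₀ ≤ (volume (Metric.ball x₀ R)).toReal⁻¹ * (∫ x in Metric.ball x₀ R, w x)
      + a * R ^ 2 / (2 * ((N : ℝ) + 2)) * sSup (w '' Metric.ball x₀ R) := by
  have hbdd : BddAbove (w '' ball x₀ R) :=
    ((isCompact_closedBall x₀ R).bddAbove_image hwc).mono (Set.image_mono ball_subset_closedBall)
  simpa [setAverage_eq, Measure.real] using
    stmt8_general volume ha.le hR hbdd (integrableOn_ball_of_continuousOn_closedBall volume hwc) hw2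
      fun x hx ↦ lap_eq_laplacian (hw2.contDiffAt (isOpen_ball.mem_nhds hx)) ▸ hsub x hx
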